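/- Let ρ be a binary constant-length substitution of length L ≥ 2 with Fourier matrix B(k), and suppose the polynomials Q and R are not equal. Then for Lebesgue-almost every k ∈ ℝ both Lyapunov exponents of the outward cocycle are strictly positive; in particular log√L − lim_{n→∞} (1/n)·log‖B(k)·B(Lk)···B(L^{n−1}k)‖ > 0. -/

import Mathlib

open Filter Polynomial

noncomputable section

/-- `e k = exp(2πik)`, the point on the unit circle with angle `2πk`. -/
def e (k : ℝ) : ℂ := Complex.exp (2 * Real.pi * Complex.I * k)

/-- Coincidence positions of type `a` (letter `a` encoded as `0`, `b` as `1`). -/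
def Ca {L : ℕ} (wa wb : Fin L → Fin 2) : Finset (Fin L) :=
  Finset.univ.filter fun i => wa i = 0 ∧ wb i = 0

/-- Coincidence positions of type `b`. -/
def Cb {L : ℕ} (wa wb : Fin L → Fin 2) : Finset (Fin L) :=
  Finset.univ.filter fun i => wa i = 1 ∧ wb i = 1

/-- Bijective positions where `(w_a)_i = a` and `(w_b)_i = b`. -/
def Pa {L : ℕ} (wa wb : Fin L → Fin 2) : Finset (Fin L) :=
  Finset.univ.filter fun i => wa i = 0 ∧ wb i = 1

/-- Bijective positions where `(w_a)_i = b` and `(w_b)_i = a`. -/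
def Pb {L : ℕ} (wa wb : Fin L → Fin 2) : Finset (Fin L) :=
  Finset.univ.filter fun i => wa i = 1 ∧ wb i = 0

/-- The polynomial `∑_{z ∈ S} X^z` associated with a set of positions. -/
def posPoly {L : ℕ} (S : Finset (Fin L)) : Polynomial ℂ :=
  ∑ z ∈ S, Polynomial.X ^ (z : ℕ)

/-- The Fourier matrix `B(k)` of the substitution determined by `wa, wb`. -/
def FourierB {L : ℕ} (wa wb : Fin L → Fin 2) (k : ℝ) : Matrix (Fin 2) (Fin 2) ℂ :=
  !![(posPoly (Ca wa wb) + posPoly (Pa wa wb)).eval (e k),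
     (posPoly (Ca wa wb) + posPoly (Pb wa wb)).eval (e k);
     (posPoly (Cb wa wb) + posPoly (Pb wa wb)).eval (e k),
     (posPoly (Cb wa wb) + posPoly (Pa wa wb)).eval (e k)]

/-- The logarithmic Mahler measure `m(f) = ∫₀¹ log |f(e^{2πik})| dk`. -/
def logMahler (f : Polynomial ℂ) : ℝ :=
  ∫ k in (0:ℝ)..1, Real.log ‖f.eval (e k)‖

/-- The operator norm of a matrix, induced by the Euclidean norm on `ℂ²`. -/
def opNorm (M : Matrix (Fin 2) (Fin 2) ℂ) : ℝ :=
  ‖Matrix.toEuclideanCLM (𝕜 := ℂ) M‖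

/-- The (forward) matrix product `B(k) · B(Lk) ⋯ B(L^{n-1}k)` of the outward cocycle. -/
def cocycleProd {L : ℕ} (wa wb : Fin L → Fin 2) (k : ℝ) (n : ℕ) :
    Matrix (Fin 2) (Fin 2) ℂ :=
  (((List.range n).map fun m => FourierB wa wb ((L : ℝ) ^ m * k))).prod

open MeasureTheory

def maxSum {α : Type*} (T : α → α) (f : α → ℝ) : ℕ → α → ℝ
  | 0 => fun _ => 0
  | n + 1 => fun x => max 0 (f x + maxSum T f n (T x))

theorem maxSum_succ {α : Type*} (T : α → α) (f : α → ℝ) (n : ℕ) (x : α) :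
    maxSum T f (n + 1) x = max 0 (f x + maxSum T f n (T x)) := rfl

theorem maxSum_nonneg {α : Type*} (T : α → α) (f : α → ℝ) (n : ℕ) (x : α) :
    0 ≤ maxSum T f n x := by
  cases n with
  | zero => exact le_refl _
  | succ n => exact le_max_left _ _

theorem maxSum_mono_succ {α : Type*} (T : α → α) (f : α → ℝ) (n : ℕ) (x : α) :
    maxSum T f n x ≤ maxSum T f (n + 1) x := by
  induction n generalizing x with
  | zero => exact maxSum_nonneg _ _ _ _
  | succ n ih =>
    rw [maxSum_succ, maxSum_succ T f (n + 1)]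
    have := ih (T x)
    gcongr

theorem maxSum_mono {α : Type*} (T : α → α) (f : α → ℝ) (x : α) :
    Monotone (fun n => maxSum T f n x) :=
  monotone_nat_of_le_succ fun n => maxSum_mono_succ T f n x

theorem birkhoffSum_le_maxSum {α : Type*} (T : α → α) (f : α → ℝ) (n : ℕ) (x : α) :
    birkhoffSum T f n x ≤ maxSum T f n x := by
  induction n generalizing x with
  | zero => simp [maxSum]
  | succ n ih =>
    rw [birkhoffSum_succ', maxSum_succ]
    have := ih (T x)
    exact le_trans (by linarith) (le_max_right _ _)

theorem maxSum_bdd_iff {α : Type*} (T : α → α) (f : α → ℝ) (x : α) :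
    BddAbove (Set.range fun n => maxSum T f n (T x)) ↔
      BddAbove (Set.range fun n => maxSum T f n x) := by
  constructor
  · rintro ⟨c, hc⟩
    refine ⟨max 0 (f x + c), ?_⟩
    rintro _ ⟨n, rfl⟩
    refine le_trans (maxSum_mono_succ T f n x) ?_
    rw [maxSum_succ]
    have : maxSum T f n (T x) ≤ c := hc ⟨n, rfl⟩
    gcongr
  · rintro ⟨c, hc⟩
    refine ⟨c - f x, ?_⟩
    rintro _ ⟨n, rfl⟩
    have h1 : maxSum T f (n + 1) x ≤ c := hc ⟨n + 1, rfl⟩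
    rw [maxSum_succ] at h1
    have := le_max_right 0 (f x + maxSum T f n (T x))
    simp only
    linarith

theorem maxSum_measurable {α : Type*} [MeasurableSpace α] {T : α → α} {f : α → ℝ}
    (hT : Measurable T) (hf : Measurable f) (n : ℕ) : Measurable (maxSum T f n) := by
  induction n with
  | zero => exact measurable_const
  | succ n ih => exact measurable_const.max (hf.add (ih.comp hT))

theorem maxSum_integrable {α : Type*} [MeasurableSpace α] {μ : Measure α} {T : α → α} {f : α → ℝ}
    (hT : MeasurePreserving T μ μ) (hf : Integrable f μ) (n : ℕ) :
    Integrable (maxSum T f n) μ := by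
  induction n with
  | zero => exact integrable_zero _ _ _
  | succ n ih =>
    have h1 : Integrable (fun x => maxSum T f n (T x)) μ := hT.integrable_comp_of_integrable ih
    exact (integrable_zero _ _ _).sup (hf.add h1)

theorem birkhoff_aux {α : Type*} [MeasurableSpace α] {μ : Measure α} [IsProbabilityMeasure μ]
    {T : α → α} (hT : Ergodic T μ) {f : α → ℝ} (hfm : Measurable f) (hf : Integrable f μ)
    (hneg : ∫ x, f x ∂μ < 0) :
    ∀ᵐ x ∂μ, ∃ c : ℝ, ∀ n, birkhoffSum T f n x ≤ c := by
  have hTm := hT.toMeasurePreserving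
  set A : Set α := {x | BddAbove (Set.range fun n => maxSum T f n x)} with hA
  have hAm : MeasurableSet A :=
    measurableSet_bddAbove_range fun n => maxSum_measurable hTm.measurable hfm n
  have hinv : T ⁻¹' A = A := by
    ext x; exact maxSum_bdd_iff T f x
  rcases hT.toPreErgodic.measure_self_or_compl_eq_zero hAm hinv with h0 | h0
  · exfalso
    have hae : ∀ᵐ x ∂μ, x ∉ A := measure_eq_zero_iff_ae_notMem.1 h0
    have hlim : Tendsto (fun n => ∫ x, max (-maxSum T f n (T x)) (f x) ∂μ) atTop
        (nhds (∫ x, f x ∂μ)) := by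
      refine tendsto_integral_of_dominated_convergence (fun x => |f x|) ?_ hf.abs ?_ ?_
      · intro n
        exact (((maxSum_measurable hTm.measurable hfm n).comp hTm.measurable).neg.max
          hfm).aestronglyMeasurable
      · intro n
        refine Eventually.of_forall fun x => ?_
        have := maxSum_nonneg T f n (T x)
        rw [Real.norm_eq_abs, abs_le]
        constructor
        · exact le_trans (neg_abs_le _) (le_max_right _ _)
        · exact max_le (by have := abs_nonneg (f x); linarith) (le_abs_self _)
      · filter_upwards [hae] with x hx
        have hx' : ¬ BddAbove (Set.range fun n => maxSum T f n (T x)) := by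
          rw [maxSum_bdd_iff]; exact hx
        have hat := tendsto_atTop_atTop_of_monotone' (maxSum_mono T f (T x)) hx'
        refine tendsto_const_nhds.congr' ?_
        filter_upwards [hat.eventually_ge_atTop (-f x)] with n hn
        exact (max_eq_right (by linarith)).symm
    have hge : 0 ≤ ∫ x, f x ∂μ := by
      refine ge_of_tendsto' hlim fun n => ?_
      have hi := maxSum_integrable hTm hf
      have hc : Integrable (fun x => maxSum T f n (T x)) μ :=
        hTm.integrable_comp_of_integrable (hi n)
      have e1 : ∀ x, max (-maxSum T f n (T x)) (f x)
          = maxSum T f (n + 1) x - maxSum T f n (T x) := by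
        intro x
        rw [maxSum_succ, ← max_sub_sub_right]
        congr 1 <;> ring
      have e2 : ∫ x, maxSum T f n (T x) ∂μ = ∫ x, maxSum T f n x ∂μ := by
        have h3 := integral_map (μ := μ) hTm.measurable.aemeasurable (f := maxSum T f n)
          (maxSum_measurable hTm.measurable hfm n).aestronglyMeasurable
        rw [hTm.map_eq] at h3
        exact h3.symm
      simp_rw [e1]
      rw [integral_sub (hi _) hc, e2, sub_nonneg]
      exact integral_mono (hi _) (hi _) fun x => maxSum_mono_succ T f n x
    linarith
  · have hae : ∀ᵐ x ∂μ, x ∉ Aᶜ := measure_eq_zero_iff_ae_notMem.1 h0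
    filter_upwards [hae] with x hx
    have hx' : x ∈ A := by simpa using hx
    obtain ⟨c, hc⟩ := hx'
    exact ⟨c, fun n => (birkhoffSum_le_maxSum T f n x).trans (hc ⟨n, rfl⟩)⟩

theorem birkhoff_upper {α : Type*} [MeasurableSpace α] {μ : Measure α} [IsProbabilityMeasure μ]
    {T : α → α} (hT : Ergodic T μ) {f : α → ℝ} (hfm : Measurable f) (hf : Integrable f μ) :
    ∀ᵐ x ∂μ, ∀ ε : ℝ, 0 < ε → ∀ᶠ n : ℕ in atTop,
      (1 / n : ℝ) * birkhoffSum T f n x < ∫ y, f y ∂μ + ε := by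
  have key : ∀ m : ℕ, ∀ᵐ x ∂μ, ∃ c : ℝ, ∀ n,
      birkhoffSum T (fun y => f y - (∫ y, f y ∂μ + 1 / ((m : ℝ) + 1))) n x ≤ c := by
    intro m
    apply birkhoff_aux hT (hfm.sub measurable_const) (hf.sub (integrable_const _))
    have h5 := integral_sub hf (integrable_const (μ := μ) (∫ y, f y ∂μ + 1 / ((m : ℝ) + 1)))
    simp only [Pi.sub_apply]
    rw [h5]
    simp only [integral_const, probReal_univ, one_smul]
    have : 0 < 1 / ((m : ℝ) + 1) := by positivity
    linarith
  filter_upwards [ae_all_iff.2 key] with x hx ε hε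
  obtain ⟨m, hm⟩ := exists_nat_one_div_lt (half_pos hε)
  obtain ⟨c, hc⟩ := hx m
  have hbd : Tendsto (fun n : ℕ => (1 / n : ℝ) * c) atTop (nhds 0) := by
    simpa using tendsto_one_div_atTop_nhds_zero_nat.mul_const c
  filter_upwards [hbd.eventually_lt_const (half_pos hε), eventually_gt_atTop 0] with n hn hn0
  have h1 := hc n
  have hnr : (0 : ℝ) < n := by exact_mod_cast hn0
  have h2 : birkhoffSum T (fun y => f y - (∫ y, f y ∂μ + 1 / ((m : ℝ) + 1))) n x
      = birkhoffSum T f n x - n * (∫ y, f y ∂μ + 1 / ((m : ℝ) + 1)) := by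
    simp [birkhoffSum, Finset.sum_sub_distrib]
    ring
  rw [h2] at h1
  have h3 : (1 / n : ℝ) * birkhoffSum T f n x
      ≤ (1 / n : ℝ) * (c + n * (∫ y, f y ∂μ + 1 / ((m : ℝ) + 1))) := by
    gcongr; linarith
  have h4 : (1 / n : ℝ) * (c + n * (∫ y, f y ∂μ + 1 / ((m : ℝ) + 1)))
      = (1 / n : ℝ) * c + (∫ y, f y ∂μ + 1 / ((m : ℝ) + 1)) := by
    field_simp
  linarith

theorem birkhoff_ergodic {α : Type*} [MeasurableSpace α] {μ : Measure α} [IsProbabilityMeasure μ]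
    {T : α → α} (hT : Ergodic T μ) {f : α → ℝ} (hfm : Measurable f) (hf : Integrable f μ) :
    ∀ᵐ x ∂μ, Tendsto (fun n : ℕ => (1 / n : ℝ) * birkhoffSum T f n x) atTop
      (nhds (∫ y, f y ∂μ)) := by
  filter_upwards [birkhoff_upper hT hfm hf, birkhoff_upper hT hfm.neg hf.neg] with x h1 h2
  rw [Metric.tendsto_nhds]
  intro ε hε
  filter_upwards [h1 ε hε, h2 ε hε] with n hn1 hn2
  have e1 : birkhoffSum T (-f) n x = - birkhoffSum T f n x := by
    simp [birkhoffSum]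
  rw [e1] at hn2
  simp only [Pi.neg_apply, integral_neg] at hn2
  rw [Real.dist_eq, abs_lt]
  constructor <;> linarith

/-- The point of the unit circle attached to a point of `ℝ/ℤ`. -/
def tc (x : AddCircle (1:ℝ)) : ℂ := (AddCircle.toCircle x : Circle)

theorem continuous_tc : Continuous tc :=
  continuous_subtype_val.comp AddCircle.continuous_toCircle

theorem injective_tc : Function.Injective tc :=
  Circle.coe_injective.comp (AddCircle.injective_toCircle one_ne_zero)

theorem norm_tc (x : AddCircle (1:ℝ)) : ‖tc x‖ = 1 := Circle.norm_coe _

instance circle_prob : IsProbabilityMeasure (volume : Measure (AddCircle (1:ℝ))) :=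
  ⟨by rw [AddCircle.measure_univ]; simp⟩

instance circle_null : NullSingletonClass (volume : Measure (AddCircle (1:ℝ))) :=
  ⟨fun x => by
    have h := AddCircle.volume_closedBall (T := 1) (x := x) 0
    simpa using h⟩

theorem e_eq_toCircle (k : ℝ) : e k = tc (k : AddCircle (1:ℝ)) := by
  rw [tc, AddCircle.toCircle_apply_mk, Circle.coe_exp, e]
  congr 1
  push_cast
  ring

theorem circleMap_eq (k : ℝ) : circleMap 0 1 (2 * Real.pi * k) = e k := by
  rw [circleMap, e]
  simp only [Complex.ofReal_one, one_mul, zero_add]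
  congr 1
  push_cast
  ring

theorem integral_circle (g : ℂ → ℝ) :
    ∫ x : AddCircle (1:ℝ), g (tc x) = Real.circleAverage g 0 1 := by
  rw [← AddCircle.intervalIntegral_preimage 1 0, Real.circleAverage]
  have h := intervalIntegral.smul_integral_comp_mul_left (a := 0) (b := 1)
    (fun θ => g (circleMap 0 1 θ)) (2 * Real.pi)
  simp only [mul_zero, mul_one] at h
  rw [← h, smul_smul, inv_mul_cancel₀ (by positivity), one_smul]
  simp only [zero_add]
  refine intervalIntegral.integral_congr fun k _ => ?_
  simp only [circleMap_eq, e_eq_toCircle]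

theorem integrable_circle (p : ℂ[X]) :
    Integrable (fun x : AddCircle (1:ℝ) => Real.log ‖p.eval (tc x)‖) := by
  have h0 : IntervalIntegrable (fun k : ℝ => Real.log ‖p.eval (e k)‖) volume 0 1 := by
    have han : ∀ x : ℝ, AnalyticAt ℝ (fun k : ℝ => p.eval (e k)) x := by
      intro x
      have h1 : AnalyticAt ℝ e x := by
        unfold e
        have h3 : AnalyticAt ℝ (fun k : ℝ => (2 * Real.pi * Complex.I : ℂ) * (k : ℂ)) x :=
          analyticAt_const.mul (Complex.ofRealCLM.analyticAt x)
        have h4 : AnalyticAt ℝ Complex.exp ((2 * Real.pi * Complex.I : ℂ) * (x : ℂ)) :=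
          (Complex.differentiable_exp.analyticAt _).restrictScalars
        exact AnalyticAt.comp (f := fun k : ℝ => (2 * Real.pi * Complex.I : ℂ) * (k : ℂ)) h4 h3
      have h2 : AnalyticAt ℝ (fun z : ℂ => p.eval z) (e x) :=
        ((p.differentiable.analyticAt (e x))).restrictScalars
      exact h2.comp h1
    exact MeromorphicOn.intervalIntegrable_log_norm (fun x _ => (han x).meromorphicAt)
  rw [intervalIntegrable_iff_integrableOn_Ioc_of_le zero_le_one] at h0
  have hmp := AddCircle.measurePreserving_mk (1:ℝ) 0
  have hm : AEStronglyMeasurable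
      (fun x : AddCircle (1:ℝ) => Real.log ‖p.eval (tc x)‖) volume := by
    apply Measurable.aestronglyMeasurable
    have : Continuous (fun x : AddCircle (1:ℝ) => ‖p.eval (tc x)‖) :=
      (p.continuous.comp continuous_tc).norm
    exact Real.measurable_log.comp this.measurable
  rw [← hmp.map_eq] at hm ⊢
  rw [integrable_map_measure hm hmp.measurable.aemeasurable]
  rw [zero_add]
  refine h0.congr (Eventually.of_forall fun k => ?_)
  simp [e_eq_toCircle]

theorem measurable_circle (p : ℂ[X]) :
    Measurable (fun x : AddCircle (1:ℝ) => Real.log ‖p.eval (tc x)‖) := by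
  have : Continuous (fun x : AddCircle (1:ℝ) => ‖p.eval (tc x)‖) :=
    (p.continuous.comp continuous_tc).norm
  exact Real.measurable_log.comp this.measurable

theorem ae_ne_zero (p : ℂ[X]) (hp : p ≠ 0) :
    ∀ᵐ x : AddCircle (1:ℝ), p.eval (tc x) ≠ 0 := by
  have hinj : Function.Injective (fun x : AddCircle (1:ℝ) => (tc x)) :=
    injective_tc
  have hfin : Set.Finite {x : AddCircle (1:ℝ) | p.eval (tc x) = 0} := by
    have h1 : Set.Finite {z : ℂ | p.IsRoot z} := Polynomial.finite_setOfPred_isRoot hp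
    exact h1.preimage hinj.injOn
  exact measure_eq_zero_iff_ae_notMem.1 (hfin.measure_zero _)

theorem ae_real_of_ae_circle {P : AddCircle (1:ℝ) → Prop} (h : ∀ᵐ x, P x) :
    ∀ᵐ k : ℝ, P (k : AddCircle (1:ℝ)) := by
  have h1 : ∀ n : ℤ, ∀ᵐ k : ℝ, k ∈ Set.Ioc (n : ℝ) (n + 1) → P (k : AddCircle (1:ℝ)) := by
    intro n
    rw [← ae_restrict_iff' measurableSet_Ioc]
    exact (AddCircle.measurePreserving_mk (1:ℝ) n).quasiMeasurePreserving.ae h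
  filter_upwards [ae_all_iff.2 h1] with k hk
  refine hk (⌈k⌉ - 1) ⟨?_, ?_⟩
  · push_cast; linarith [Int.ceil_lt_add_one k]
  · push_cast; linarith [Int.le_ceil k]

theorem poly_birkhoff (L : ℕ) (hL : 2 ≤ L) (p : ℂ[X]) (hp : p ≠ 0) :
    ∀ᵐ k : ℝ, (∀ j : ℕ, p.eval (e ((L : ℝ) ^ j * k)) ≠ 0) ∧
      Tendsto (fun n : ℕ => (1 / n : ℝ) *
        ∑ j ∈ Finset.range n, Real.log ‖p.eval (e ((L : ℝ) ^ j * k))‖) atTop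
        (nhds p.logMahlerMeasure) := by
  have hT : Ergodic (fun y : AddCircle (1:ℝ) => L • y) := AddCircle.ergodic_nsmul (by omega)
  have h1 := birkhoff_ergodic hT (measurable_circle p) (integrable_circle p)
  have h2 : ∀ᵐ x : AddCircle (1:ℝ), ∀ j : ℕ,
      p.eval (tc ((fun y : AddCircle (1:ℝ) => L • y)^[j] x)) ≠ 0 := by
    rw [ae_all_iff]
    intro j
    have hq := (hT.toMeasurePreserving.iterate j).quasiMeasurePreserving
    exact hq.ae (p := fun x => p.eval (tc x) ≠ 0) (ae_ne_zero p hp)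
  have hI := integral_circle (fun z => Real.log ‖p.eval z‖)
  rw [hI, ← Polynomial.logMahlerMeasure_def] at h1
  have hit : ∀ (j : ℕ) (k : ℝ), (fun y : AddCircle (1:ℝ) => L • y)^[j] (k : AddCircle (1:ℝ))
      = (((L : ℝ) ^ j * k : ℝ) : AddCircle (1:ℝ)) := by
    intro j k
    rw [smul_iterate_apply, ← AddCircle.coe_nsmul]
    congr 1
    simp
  filter_upwards [ae_real_of_ae_circle h1, ae_real_of_ae_circle h2] with k hk1 hk2
  constructor
  · intro j
    have := hk2 j
    rwa [hit, ← e_eq_toCircle] at this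
  · simp only [birkhoffSum, hit, ← e_eq_toCircle] at hk1
    exact hk1

theorem poly_eq_of_norm (p : ℂ[X]) (c : ℝ)
    (h : Set.Infinite {z : ℂ | ‖z‖ = 1 ∧ ‖p.eval z‖ ^ 2 = c}) :
    p * (p.map (starRingEnd ℂ)).reverse = C (c : ℂ) * X ^ p.natDegree := by
  refine Polynomial.eq_of_infinite_eval_eq _ _ (h.mono ?_)
  rintro z ⟨hz, hc⟩
  have hz0 : z ≠ 0 := by
    rintro rfl; simp at hz
  have hinv : (starRingEnd ℂ) z = z⁻¹ := (Complex.inv_eq_conj hz).symm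
  have h1 : (p.map (starRingEnd ℂ)).eval (z⁻¹) = (starRingEnd ℂ) (p.eval z) := by
    rw [← hinv, Polynomial.eval_map, Polynomial.eval₂_at_apply]
  let _inst : Invertible (z⁻¹) := invertibleOfNonzero (inv_ne_zero hz0)
  have h2 := Polynomial.eval₂_reverse_mul_pow (RingHom.id ℂ) (z⁻¹) (p.map (starRingEnd ℂ))
  have hdeg : (p.map (starRingEnd ℂ)).natDegree = p.natDegree :=
    Polynomial.natDegree_map_eq_of_injective (RingHom.injective _) p
  rw [hdeg, invOf_eq_inv, inv_inv] at h2
  rw [Polynomial.eval₂_id, Polynomial.eval₂_id, h1] at h2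
  simp only [Set.mem_ofPred_eq, eval_mul, eval_C, eval_pow, eval_X]
  have h3 : (p.map (starRingEnd ℂ)).reverse.eval z = (starRingEnd ℂ) (p.eval z) * z ^ p.natDegree := by
    rw [← h2, mul_assoc, ← mul_pow, inv_mul_cancel₀ hz0, one_pow, mul_one]
  rw [h3, ← mul_assoc, Complex.mul_conj, Complex.normSq_eq_norm_sq, hc]

theorem logMahler_lt (L : ℕ) (hL : 2 ≤ L) (p : ℂ[X]) (hp : p ≠ 0) (hdeg : p.natDegree < L)
    (hco : ∀ i, ‖p.coeff i‖ ≤ 1) : p.logMahlerMeasure < Real.log (Real.sqrt L) := by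
  have hLpos : (0:ℝ) < L := by positivity
  rw [Real.log_sqrt hLpos.le]
  by_contra hcon
  push Not at hcon
  set s : ℝ := ∑ i ∈ p.support, ‖p.coeff i‖ ^ 2 with hs
  have hsup : p.support ⊆ Finset.range L := fun i hi => by
    rw [Finset.mem_range]; exact lt_of_le_of_lt (Polynomial.le_natDegree_of_mem_supp i hi) hdeg
  have hs1 : s ≤ p.support.card := by
    rw [hs, Finset.card_eq_sum_ones]
    push_cast
    refine Finset.sum_le_sum fun i _ => ?_
    exact pow_le_one₀ (norm_nonneg _) (hco i)
  have hcard : p.support.card ≤ L := by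
    simpa using Finset.card_le_card hsup
  have hcard' : (p.support.card : ℝ) ≤ L := by exact_mod_cast hcard
  have hsL : s ≤ L := hs1.trans hcard'
  have hint1 := integral_circle (fun z => ‖p.eval z‖ ^ 2)
  rw [← Polynomial.sum_sq_norm_coeff_eq_circleAverage, ← hs] at hint1
  have hint2 := integral_circle (fun z => Real.log ‖p.eval z‖)
  rw [← Polynomial.logMahlerMeasure_def] at hint2
  have hcont : Continuous (fun x : AddCircle (1:ℝ) => ‖p.eval (tc x)‖ ^ 2) :=
    ((p.continuous.comp continuous_tc).norm).pow 2
  have hi1 : Integrable (fun x : AddCircle (1:ℝ) => ‖p.eval (tc x)‖ ^ 2) :=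
    hcont.integrable_of_hasCompactSupport (HasCompactSupport.of_compactSpace _)
  have hi2 := integrable_circle p
  set h : AddCircle (1:ℝ) → ℝ := fun x =>
    (‖p.eval (tc x)‖ ^ 2 / L - 2 * Real.log ‖p.eval (tc x)‖)
      + (Real.log L - 1) with hh
  have hhi : Integrable h := ((hi1.div_const _).sub (hi2.const_mul 2)).add (integrable_const _)
  have hhint : ∫ x, h x = s / L - 2 * p.logMahlerMeasure + (Real.log L - 1) := by
    have j1 := integral_add ((hi1.div_const (L : ℝ)).sub (hi2.const_mul 2))
      (integrable_const (Real.log L - 1))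
    have j2 := integral_sub (hi1.div_const (L : ℝ)) (hi2.const_mul 2)
    rw [integral_div, integral_const_mul, hint1, hint2] at j2
    simp only [Pi.sub_apply] at j1
    rw [j2] at j1
    simp only [integral_const, probReal_univ, one_smul] at j1
    exact j1
  have hlog : ∀ x : AddCircle (1:ℝ), p.eval (tc x) ≠ 0 →
      h x = ‖p.eval (tc x)‖ ^ 2 / L - 1
        - Real.log (‖p.eval (tc x)‖ ^ 2 / L) := by
    intro x hx
    have : ‖p.eval (tc x)‖ ^ 2 ≠ 0 := by positivity
    rw [Real.log_div this hLpos.ne', Real.log_pow, hh]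
    push_cast
    ring
  have hnn : 0 ≤ᵐ[volume] h := by
    filter_upwards [ae_ne_zero p hp] with x hx
    rw [hlog x hx]
    have : 0 < ‖p.eval (tc x)‖ ^ 2 / L := by positivity
    have := Real.log_le_sub_one_of_pos this
    simp only [Pi.zero_apply]
    linarith
  have hge := integral_nonneg_of_ae hnn
  have hsd : s / L ≤ 1 := (div_le_one hLpos).2 hsL
  have hs_eq : s / L = 1 := by linarith
  have hzero : ∫ x, h x = 0 := by linarith
  rw [integral_eq_zero_iff_of_nonneg_ae hnn hhi] at hzero
  have hsL' : s = L := by field_simp at hs_eq; exact hs_eq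
  have hceq : p.support.card = L := by
    apply le_antisymm hcard
    have : (L : ℝ) ≤ p.support.card := by linarith
    exact_mod_cast this
  have hsupeq : p.support = Finset.range L :=
    Finset.eq_of_subset_of_card_le hsup (by simp [hceq])
  have hae : ∀ᵐ x : AddCircle (1:ℝ), ‖p.eval (tc x)‖ ^ 2 = L := by
    filter_upwards [ae_ne_zero p hp, hzero] with x hx hx0
    rw [hlog x hx] at hx0
    have hpos : 0 < ‖p.eval (tc x)‖ ^ 2 / L := by positivity
    by_contra hne
    have h1 : ‖p.eval (tc x)‖ ^ 2 / L ≠ 1 := by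
      intro h2; apply hne; field_simp at h2; exact h2
    have := Real.log_lt_sub_one_of_pos hpos h1
    simp only [Pi.zero_apply] at hx0
    linarith
  have hinf : Set.Infinite {z : ℂ | ‖z‖ = 1 ∧ ‖p.eval z‖ ^ 2 = (L : ℝ)} := by
    intro hfin
    have hinj : Function.Injective (fun x : AddCircle (1:ℝ) => (tc x)) :=
      injective_tc
    have hfin' := hfin.preimage (f := fun x : AddCircle (1:ℝ) => (tc x))
      hinj.injOn
    have hm0 := hfin'.measure_zero (volume : Measure (AddCircle (1:ℝ)))
    have hf : ∀ᵐ x : AddCircle (1:ℝ), False := by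
      filter_upwards [measure_eq_zero_iff_ae_notMem.1 hm0, hae] with x h1 h2
      exact h1 ⟨norm_tc _, h2⟩
    simp [ae_iff] at hf
  have hpoly := poly_eq_of_norm p L hinf
  have hd : p.natDegree = L - 1 := by
    have h1 : L - 1 ∈ p.support := by rw [hsupeq, Finset.mem_range]; omega
    have := Polynomial.le_natDegree_of_mem_supp _ h1
    omega
  have h0 : p.coeff 0 ≠ 0 := by
    have h1 : 0 ∈ p.support := by rw [hsupeq, Finset.mem_range]; omega
    exact Polynomial.mem_support_iff.1 h1
  have hev := congrArg (fun q => q.coeff 0) hpoly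
  simp only [Polynomial.mul_coeff_zero, Polynomial.coeff_zero_reverse, hd] at hev
  have hpne : p.map (starRingEnd ℂ) ≠ 0 := by
    rw [Ne, Polynomial.map_eq_zero]; exact hp
  have hX : ((X : ℂ[X]) ^ (L - 1)).coeff 0 = 0 := by
    rw [Polynomial.coeff_X_pow]; simp; omega
  rw [hX, mul_zero] at hev
  rcases mul_eq_zero.1 hev with h1 | h1
  · exact h0 h1
  · exact hpne (Polynomial.leadingCoeff_eq_zero.1 h1)

/-- Sum of the absolute values of the entries. -/
def entrySum (M : Matrix (Fin 2) (Fin 2) ℂ) : ℝ :=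
  ‖M 0 0‖ + ‖M 0 1‖ + ‖M 1 0‖ + ‖M 1 1‖

theorem norm_le_two (y : EuclideanSpace ℂ (Fin 2)) : ‖y‖ ≤ ‖y 0‖ + ‖y 1‖ := by
  rw [EuclideanSpace.norm_eq, Fin.sum_univ_two, Real.sqrt_le_iff]
  have h0 := norm_nonneg (y 0)
  have h1 := norm_nonneg (y 1)
  constructor
  · positivity
  · nlinarith

theorem opNorm_le_entrySum (M : Matrix (Fin 2) (Fin 2) ℂ) : opNorm M ≤ entrySum M := by
  unfold opNorm
  refine ContinuousLinearMap.opNorm_le_bound _ (by unfold entrySum; positivity) fun x => ?_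
  have happ : ∀ i, (Matrix.toEuclideanCLM (𝕜 := ℂ) M x) i = M i 0 * x 0 + M i 1 * x 1 := by
    intro i
    have : (Matrix.toEuclideanCLM (𝕜 := ℂ) M x) i = (M.mulVec x.ofLp) i := rfl
    rw [this, Matrix.mulVec, dotProduct, Fin.sum_univ_two]
  have hx0 : ‖x 0‖ ≤ ‖x‖ := PiLp.norm_apply_le x 0
  have hx1 : ‖x 1‖ ≤ ‖x‖ := PiLp.norm_apply_le x 1
  have hb : ∀ i, ‖(Matrix.toEuclideanCLM (𝕜 := ℂ) M x) i‖ ≤ (‖M i 0‖ + ‖M i 1‖) * ‖x‖ := by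
    intro i
    rw [happ]
    refine (norm_add_le _ _).trans ?_
    rw [norm_mul, norm_mul, add_mul]
    gcongr
  refine (norm_le_two _).trans ?_
  have h0 := hb 0
  have h1 := hb 1
  unfold entrySum
  linarith

theorem entry_le_opNorm (M : Matrix (Fin 2) (Fin 2) ℂ) (i j : Fin 2) : ‖M i j‖ ≤ opNorm M := by
  unfold opNorm
  have h1 := (Matrix.toEuclideanCLM (𝕜 := ℂ) M).le_opNorm (EuclideanSpace.single j (1:ℂ))
  have h2 : (Matrix.toEuclideanCLM (𝕜 := ℂ) M (EuclideanSpace.single j (1:ℂ))) i = M i j := by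
    have : (Matrix.toEuclideanCLM (𝕜 := ℂ) M (EuclideanSpace.single j (1:ℂ))) i
      = (M.mulVec (Pi.single j (1:ℂ))) i := rfl
    rw [this]; simp
  have h3 := PiLp.norm_apply_le (Matrix.toEuclideanCLM (𝕜 := ℂ) M (EuclideanSpace.single j (1:ℂ))) i
  rw [h2] at h3
  simp only [PiLp.norm_single, norm_one, mul_one] at h1
  exact h3.trans h1

theorem entrySum_le (M : Matrix (Fin 2) (Fin 2) ℂ) : entrySum M ≤ 4 * opNorm M := by
  have h1 := entry_le_opNorm M 0 0
  have h2 := entry_le_opNorm M 0 1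
  have h3 := entry_le_opNorm M 1 0
  have h4 := entry_le_opNorm M 1 1
  unfold entrySum
  linarith

theorem entrySum_inv (M : Matrix (Fin 2) (Fin 2) ℂ) :
    entrySum M⁻¹ = ‖M.det‖⁻¹ * entrySum M := by
  rw [Matrix.inv_def, Matrix.adjugate_fin_two, Ring.inverse_eq_inv']
  simp [entrySum]
  ring

theorem rate_const (a : ℕ → ℝ) (l : ℝ) (ha : ∀ n, 0 < a n)
    (h : Tendsto (fun n : ℕ => (1 / n : ℝ) * Real.log (a n)) atTop (nhds l))
    (l' : ℝ) (hl : l < l') : ∃ C : ℝ, 0 < C ∧ ∀ n : ℕ, a n ≤ C * Real.exp (n * l') := by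
  obtain ⟨N, hN⟩ := eventually_atTop.1 (h.eventually_lt_const hl)
  have hs : ∀ n : ℕ, 0 < a n * Real.exp (-(n * l')) := fun n => mul_pos (ha n) (Real.exp_pos _)
  refine ⟨1 + ∑ i ∈ Finset.range (N + 1), a i * Real.exp (-(i * l')), ?_, fun n => ?_⟩
  · have := Finset.sum_nonneg fun i (_ : i ∈ Finset.range (N + 1)) => (hs i).le
    linarith
  · have key : a n * Real.exp (-(n * l')) ≤
        1 + ∑ i ∈ Finset.range (N + 1), a i * Real.exp (-(i * l')) := by
      by_cases hn : n < N + 1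
      · have := Finset.single_le_sum (f := fun i : ℕ => a i * Real.exp (-(i * l')))
          (fun i _ => (hs i).le) (Finset.mem_range.2 hn)
        linarith
      · have h1 := hN n (by omega)
        have hn0 : (0:ℝ) < n := by
          have : 0 < n := by omega
          exact_mod_cast this
        have h2 : Real.log (a n) < n * l' := by
          rw [one_div, inv_mul_lt_iff₀ hn0] at h1
          exact h1
        have h3 : a n < Real.exp (n * l') := (Real.log_lt_iff_lt_exp (ha n)).1 h2
        have h4 : a n * Real.exp (-(n * l')) ≤ 1 := by
          rw [Real.exp_neg, ← div_eq_mul_inv, div_le_one (Real.exp_pos _)]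
          exact h3.le
        have := Finset.sum_nonneg fun i (_ : i ∈ Finset.range (N + 1)) => (hs i).le
        linarith
    rw [Real.exp_neg, ← div_eq_mul_inv, div_le_iff₀ (Real.exp_pos _)] at key
    exact key

theorem rate_upper (a : ℕ → ℝ) (C l : ℝ) (ha : ∀ n, 0 < a n) (hC : 0 < C)
    (h : ∀ n : ℕ, a n ≤ C * Real.exp (n * l)) (b : ℝ) (hb : l < b) :
    ∀ᶠ n : ℕ in atTop, (1 / n : ℝ) * Real.log (a n) < b := by
  have hbd : Tendsto (fun n : ℕ => (1 / n : ℝ) * Real.log C + l) atTop (nhds l) := by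
    simpa using (tendsto_one_div_atTop_nhds_zero_nat.mul_const (Real.log C)).add_const l
  filter_upwards [hbd.eventually_lt_const hb, eventually_gt_atTop 0] with n hn hn0
  have hnr : (0 : ℝ) < n := by exact_mod_cast hn0
  have h1 : Real.log (a n) ≤ Real.log C + n * l := by
    have := Real.log_le_log (ha n) (h n)
    rwa [Real.log_mul hC.ne' (Real.exp_pos _).ne', Real.log_exp] at this
  have h2 : (1 / n : ℝ) * Real.log (a n) ≤ (1 / n : ℝ) * (Real.log C + n * l) := by gcongr
  have h3 : (1 / n : ℝ) * (Real.log C + n * l) = (1 / n : ℝ) * Real.log C + l := by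
    field_simp
  linarith

theorem rate_lower (a N : ℕ → ℝ) (C l : ℝ) (ha : ∀ n, 0 < a n) (hC : 0 < C)
    (h : Tendsto (fun n : ℕ => (1 / n : ℝ) * Real.log (a n)) atTop (nhds l))
    (hN : ∀ n, a n ≤ C * N n) (b : ℝ) (hb : b < l) :
    ∀ᶠ n : ℕ in atTop, b < (1 / n : ℝ) * Real.log (N n) := by
  have hbd : Tendsto (fun n : ℕ => (1 / n : ℝ) * Real.log (a n) - (1 / n : ℝ) * Real.log C)
      atTop (nhds l) := by
    simpa using h.sub (tendsto_one_div_atTop_nhds_zero_nat.mul_const (Real.log C))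
  filter_upwards [hbd.eventually_const_lt hb] with n hn
  have hNp : 0 < N n := by
    have := (ha n).trans_le (hN n)
    exact pos_of_mul_pos_right this hC.le
  have h1 := Real.log_le_log (ha n) (hN n)
  rw [Real.log_mul hC.ne' hNp.ne'] at h1
  have h2 : (1 / n : ℝ) * Real.log (a n) ≤ (1 / n : ℝ) * (Real.log C + Real.log (N n)) := by gcongr
  linarith

theorem det_limit (A D X c : ℕ → ℂ) (N : ℕ → ℝ) (K m : ℝ) (hA0 : ∀ n, A n ≠ 0)
    (hD0 : ∀ n, D n ≠ 0) (hK : 0 ≤ K) (hc : ∀ n, ‖c n‖ ≤ K)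
    (hX : ∀ n, X (n + 1) = X n * (A (n + 1) / A n) + D n * c n)
    (hA : Tendsto (fun n : ℕ => (1 / n : ℝ) * Real.log ‖A n‖) atTop (nhds 0))
    (hD : Tendsto (fun n : ℕ => (1 / n : ℝ) * Real.log ‖D n‖) atTop (nhds m))
    (hNA : ∀ n, ‖A n‖ ≤ 2 * N n) (hND : ∀ n, ‖D n‖ ≤ 2 * N n)
    (hN : ∀ n, N n ≤ 4 * (‖X n‖ + ‖A n‖ + ‖D n‖)) :
    Tendsto (fun n : ℕ => (1 / n : ℝ) * Real.log (N n)) atTop (nhds (max 0 m)) := by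
  have hAp : ∀ n, 0 < ‖A n‖ := fun n => norm_pos_iff.2 (hA0 n)
  have hDp : ∀ n, 0 < ‖D n‖ := fun n => norm_pos_iff.2 (hD0 n)
  have hNp : ∀ n, 0 < N n := fun n => by linarith [hAp n, hNA n]
  rw [tendsto_order]
  constructor
  · intro b hb
    rcases lt_max_iff.1 hb with h | h
    · exact rate_lower _ N 2 0 hAp two_pos hA hNA b h
    · exact rate_lower _ N 2 m hDp two_pos hD hND b h
  · intro b hb
    set M := max 0 m with hM
    have hM0 : 0 ≤ M := le_max_left _ _
    set ε := (b - M) / 4 with hε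
    have hεp : 0 < ε := by rw [hε]; linarith
    have hAi : Tendsto (fun n : ℕ => (1 / n : ℝ) * Real.log (‖A n‖⁻¹)) atTop (nhds 0) := by
      simpa [Real.log_inv] using hA.neg
    obtain ⟨C1, hC1, h1⟩ := rate_const _ 0 hAp hA ε hεp
    obtain ⟨C2, hC2, h2⟩ := rate_const _ 0 (fun n => inv_pos.2 (hAp n)) hAi ε hεp
    obtain ⟨C3, hC3, h3⟩ := rate_const _ m hDp hD (M + ε) (by linarith [le_max_right 0 m])
    set δ := M + 2 * ε with hδ
    have hδp : 0 < δ := by rw [hδ]; linarith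
    set Y : ℕ → ℂ := fun n => X n / A n with hY
    set Cq := C3 * K * (C2 * Real.exp ε) with hCq
    have hCq_nonneg : 0 ≤ Cq := by positivity
    have hYs : ∀ n : ℕ, ‖Y (n + 1)‖ ≤ ‖Y n‖ + Cq * Real.exp (n * δ) := by
      intro n
      have e1 : Y (n + 1) = Y n + D n * c n * (A (n + 1))⁻¹ := by
        simp only [hY, hX]
        have := hA0 n
        have := hA0 (n + 1)
        field_simp
      rw [e1]
      refine (norm_add_le _ _).trans ?_
      gcongr
      rw [norm_mul, norm_mul, norm_inv]
      have h4 := h2 (n + 1)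
      calc ‖D n‖ * ‖c n‖ * ‖A (n + 1)‖⁻¹
          ≤ (C3 * Real.exp (n * (M + ε))) * K * (C2 * Real.exp ((n + 1 : ℕ) * ε)) := by
            gcongr
            · exact h3 n
            · exact hc n
        _ = Cq * Real.exp (n * δ) := by
            have : Real.exp (n * δ) * Real.exp ε
                = Real.exp (n * (M + ε)) * Real.exp ((n + 1 : ℕ) * ε) := by
              rw [← Real.exp_add, ← Real.exp_add]; congr 1; rw [hδ]; push_cast; ring
            rw [hCq]
            linear_combination (-(C3 * K * C2)) * this
    set C4 := ‖Y 0‖ + Cq / δ with hC4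
    have hC40 : 0 ≤ C4 := by positivity
    have hYb : ∀ n : ℕ, ‖Y n‖ ≤ C4 * Real.exp (n * δ) := by
      intro n
      induction n with
      | zero =>
        simp only [Nat.cast_zero, zero_mul, Real.exp_zero, mul_one]
        rw [hC4]
        have : 0 ≤ Cq / δ := by positivity
        linarith
      | succ n ih =>
        have e1 : Real.exp ((n + 1 : ℕ) * δ) = Real.exp (n * δ) * Real.exp δ := by
          rw [← Real.exp_add]; congr 1; push_cast; ring
        have e2 : C4 + Cq ≤ C4 * Real.exp δ := by
          have h5 := Real.add_one_le_exp δ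
          have h6 : Cq ≤ C4 * δ := by
            rw [hC4, add_mul, div_mul_cancel₀ _ hδp.ne']
            have : 0 ≤ ‖Y 0‖ * δ := by positivity
            linarith
          have h7 : C4 * (δ + 1) ≤ C4 * Real.exp δ := by gcongr
          linarith
        calc ‖Y (n + 1)‖ ≤ ‖Y n‖ + Cq * Real.exp (n * δ) := hYs n
          _ ≤ C4 * Real.exp (n * δ) + Cq * Real.exp (n * δ) := by gcongr
          _ = (C4 + Cq) * Real.exp (n * δ) := by ring
          _ ≤ (C4 * Real.exp δ) * Real.exp (n * δ) := by gcongr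
          _ = C4 * Real.exp ((n + 1 : ℕ) * δ) := by rw [e1]; ring
    have hfin : ∀ n : ℕ, N n ≤ (4 * (C4 * C1 + C1 + C3)) * Real.exp (n * (M + 3 * ε)) := by
      intro n
      have hn0 : (0:ℝ) ≤ n := Nat.cast_nonneg n
      have e1 : ‖X n‖ ≤ C4 * C1 * Real.exp (n * (M + 3 * ε)) := by
        have : X n = Y n * A n := by simp only [hY]; rw [div_mul_cancel₀ _ (hA0 n)]
        rw [this, norm_mul]
        calc ‖Y n‖ * ‖A n‖ ≤ (C4 * Real.exp (n * δ)) * (C1 * Real.exp (n * ε)) := by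
              gcongr
              · exact hYb n
              · exact h1 n
          _ = C4 * C1 * (Real.exp (n * δ) * Real.exp (n * ε)) := by ring
          _ = C4 * C1 * Real.exp (n * (M + 3 * ε)) := by
              rw [← Real.exp_add]; congr 2; rw [hδ]; ring
      have e2 : ‖A n‖ ≤ C1 * Real.exp (n * (M + 3 * ε)) := by
        refine (h1 n).trans ?_
        gcongr
        linarith
      have e3 : ‖D n‖ ≤ C3 * Real.exp (n * (M + 3 * ε)) := by
        refine (h3 n).trans ?_
        gcongr
        linarith
      calc N n ≤ 4 * (‖X n‖ + ‖A n‖ + ‖D n‖) := hN n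
        _ ≤ 4 * (C4 * C1 * Real.exp (n * (M + 3 * ε)) + C1 * Real.exp (n * (M + 3 * ε))
            + C3 * Real.exp (n * (M + 3 * ε))) := by gcongr
        _ = _ := by ring
    exact rate_upper N _ (M + 3 * ε) hNp (by positivity) hfin b (by rw [hε]; linarith)

theorem posPoly_coeff {L : ℕ} (S : Finset (Fin L)) (j : Fin L) :
    (posPoly S).coeff j = if j ∈ S then 1 else 0 := by
  simp only [posPoly, Polynomial.finsetSum_coeff, Polynomial.coeff_X_pow]
  simp only [Fin.val_inj]
  rw [Finset.sum_ite_eq]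

theorem posPoly_coeff_ge {L : ℕ} (S : Finset (Fin L)) (i : ℕ) (hi : L ≤ i) :
    (posPoly S).coeff i = 0 := by
  simp only [posPoly, Polynomial.finsetSum_coeff, Polynomial.coeff_X_pow]
  refine Finset.sum_eq_zero fun z _ => ?_
  have := z.2
  rw [if_neg (by omega)]

theorem diff_coeff {L : ℕ} (S T : Finset (Fin L)) (i : ℕ) :
    ‖(posPoly S - posPoly T).coeff i‖ ≤ 1 := by
  rw [Polynomial.coeff_sub]
  by_cases hi : i < L
  · have h1 := posPoly_coeff S ⟨i, hi⟩
    have h2 := posPoly_coeff T ⟨i, hi⟩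
    simp only at h1 h2
    rw [h1, h2]
    split_ifs <;> simp
  · rw [posPoly_coeff_ge S i (by omega), posPoly_coeff_ge T i (by omega)]
    simp

theorem diff_natDegree {L : ℕ} (S T : Finset (Fin L)) (h : posPoly S - posPoly T ≠ 0) :
    (posPoly S - posPoly T).natDegree < L := by
  rw [Polynomial.natDegree_lt_iff_degree_lt h, Polynomial.degree_lt_iff_coeff_zero]
  intro i hi
  rw [Polynomial.coeff_sub, posPoly_coeff_ge S i hi, posPoly_coeff_ge T i hi, sub_zero]

theorem norm_e (k : ℝ) : ‖e k‖ = 1 := by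
  rw [e, Complex.norm_exp]
  simp

theorem posPoly_norm_le {L : ℕ} (S : Finset (Fin L)) (k : ℝ) :
    ‖(posPoly S).eval (e k)‖ ≤ L := by
  simp only [posPoly, Polynomial.eval_finsetSum, Polynomial.eval_pow, Polynomial.eval_X]
  refine (norm_sum_le _ _).trans ?_
  simp only [norm_pow, norm_e, one_pow, Finset.sum_const, nsmul_eq_mul, mul_one]
  have := Finset.card_le_univ S
  rw [Fintype.card_fin] at this
  exact_mod_cast this

theorem posPoly_total {L : ℕ} (wa wb : Fin L → Fin 2) :
    posPoly (Ca wa wb) + posPoly (Cb wa wb) + posPoly (Pa wa wb) + posPoly (Pb wa wb)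
      = ∑ i ∈ Finset.range L, (X : ℂ[X]) ^ i := by
  rw [← Fin.sum_univ_eq_sum_range (fun i => (X : ℂ[X]) ^ i)]
  simp only [posPoly, Ca, Cb, Pa, Pb, Finset.sum_filter]
  simp only [← Finset.sum_add_distrib]
  refine Finset.sum_congr rfl fun i _ => ?_
  generalize wa i = x
  generalize wb i = y
  fin_cases x <;> fin_cases y <;> simp

theorem e_mul (L : ℕ) (k : ℝ) : e (L * k) = e k ^ L := by
  rw [e, e, ← Complex.exp_nat_mul]
  congr 1
  push_cast
  ring

theorem cocycle_succ {L : ℕ} (wa wb : Fin L → Fin 2) (k : ℝ) (n : ℕ) :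
    cocycleProd wa wb k (n + 1)
      = cocycleProd wa wb k n * FourierB wa wb ((L : ℝ) ^ n * k) := by
  simp [cocycleProd, List.range_succ]

theorem last_rate (l : ℕ → ℝ) (c : ℝ)
    (h : Tendsto (fun n : ℕ => (1 / n : ℝ) * ∑ j ∈ Finset.range n, l j) atTop (nhds c)) :
    Tendsto (fun n : ℕ => (1 / n : ℝ) * l n) atTop (nhds 0) := by
  have h1 := h.comp (tendsto_add_atTop_nat 1)
  have h2 : Tendsto (fun n : ℕ => 1 + (1 / n : ℝ)) atTop (nhds 1) := by
    simpa using tendsto_one_div_atTop_nhds_zero_nat.const_add (1:ℝ)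
  have h3 := (h2.mul h1).sub h
  simp only [one_mul, sub_self] at h3
  refine h3.congr' ?_
  filter_upwards [eventually_gt_atTop 0] with n hn
  have hnr : (0 : ℝ) < n := by exact_mod_cast hn
  simp only [Function.comp, Finset.sum_range_succ]
  push_cast
  field_simp
  ring

/-- For a binary constant-length substitution of length `L ≥ 2` with `Q ≠ R`,
for Lebesgue-a.e. `k` both Lyapunov exponents of the outward cocycle are strictly positive;
in particular `log √L - lim (1/n) log ‖B(k)·B(Lk)⋯B(L^{n-1}k)‖ > 0`. -/
theorem binary_substitution_positive_Lyapunov_exponents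
    (L : ℕ) (hL : 2 ≤ L) (wa wb : Fin L → Fin 2)
    (hQR : posPoly (Pa wa wb) ≠ posPoly (Pb wa wb)) :
    ∀ᵐ k : ℝ,
      ∃ χmin χmax : ℝ,
        Tendsto (fun n : ℕ =>
            Real.log (Real.sqrt L) - (1 / n : ℝ) * Real.log (opNorm (cocycleProd wa wb k n)))
          atTop (nhds χmin) ∧
        Tendsto (fun n : ℕ =>
            Real.log (Real.sqrt L) + (1 / n : ℝ) * Real.log (opNorm ((cocycleProd wa wb k n)⁻¹)))
          atTop (nhds χmax) ∧
        0 < χmin ∧ 0 < χmax := by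
  set q : ℂ[X] := posPoly (Pa wa wb) - posPoly (Pb wa wb) with hq
  have hq0 : q ≠ 0 := sub_ne_zero.2 hQR
  have hm := logMahler_lt L hL q hq0 (diff_natDegree _ _ hq0) (diff_coeff _ _)
  have hX1 : (X - C 1 : ℂ[X]) ≠ 0 := Polynomial.X_sub_C_ne_zero 1
  have hLpos : (0:ℝ) < Real.log (Real.sqrt L) := by
    apply Real.log_pos
    rw [Real.lt_sqrt zero_le_one]
    have : (2:ℝ) ≤ L := by exact_mod_cast hL
    linarith
  filter_upwards [poly_birkhoff L hL q hq0, poly_birkhoff L hL (X - C 1) hX1] with k hk1 hk2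
  obtain ⟨hd0, hdlim⟩ := hk1
  obtain ⟨hu0, hulim⟩ := hk2
  set m := q.logMahlerMeasure with hmdef
  have hulast := last_rate _ _ hulim
  simp only [eval_sub, eval_X, eval_C] at hu0 hulast
  set u : ℕ → ℂ := fun n => e ((L : ℝ) ^ n * k) with hu
  have hus : ∀ n, u (n + 1) = u n ^ L := by
    intro n
    simp only [hu]
    rw [← e_mul]
    congr 1
    ring
  set x : ℕ → ℂ := fun n => (FourierB wa wb ((L : ℝ) ^ n * k)) 0 0 with hx
  set d : ℕ → ℂ := fun n => q.eval (u n) with hd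
  set a : ℕ → ℂ := fun n => (u (n + 1) - 1) / (u n - 1) with ha
  set D : ℕ → ℂ := fun n => ∏ j ∈ Finset.range n, d j with hDdef
  set A : ℕ → ℂ := fun n => (u n - 1) / (u 0 - 1) with hAdef
  have hAs : ∀ n, A (n + 1) = A n * a n := by
    intro n
    simp only [hAdef, ha]
    have h1 : u n - 1 ≠ 0 := hu0 n
    have h2 : u 0 - 1 ≠ 0 := hu0 0
    field_simp
  have hDs : ∀ n, D (n + 1) = D n * d n := fun n => Finset.prod_range_succ _ _
  have hA0 : ∀ n, A n ≠ 0 := fun n => div_ne_zero (hu0 n) (hu0 0)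
  have hD0 : ∀ n, D n ≠ 0 := fun n => Finset.prod_ne_zero_iff.2 fun j _ => hd0 j
  have hatot : ∀ n, a n = (posPoly (Ca wa wb)).eval (u n) + (posPoly (Cb wa wb)).eval (u n)
      + (posPoly (Pa wa wb)).eval (u n) + (posPoly (Pb wa wb)).eval (u n) := by
    intro n
    have h1 := congrArg (fun p => p.eval (u n)) (posPoly_total wa wb)
    simp only [eval_add, eval_finsetSum, eval_pow, eval_X] at h1
    rw [h1]
    simp only [ha]
    rw [hus, div_eq_iff (hu0 n), geom_sum_mul]
  have hxd : ∀ n, x n = (posPoly (Ca wa wb)).eval (u n) + (posPoly (Pa wa wb)).eval (u n) := by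
    intro n
    simp [hx, FourierB, hu]
  have hdd : ∀ n, d n = (posPoly (Pa wa wb)).eval (u n) - (posPoly (Pb wa wb)).eval (u n) := by
    intro n
    simp only [hd, hq, eval_sub]
  have hB : ∀ n, FourierB wa wb ((L : ℝ) ^ n * k)
      = !![x n, x n - d n; a n - x n, a n - x n + d n] := by
    intro n
    rw [hatot, hxd, hdd]
    ext i j
    fin_cases i <;> fin_cases j <;> simp [FourierB, hu] <;> ring
  set Xn : ℕ → ℂ := fun n => (cocycleProd wa wb k n) 0 0 with hXn
  have hM : ∀ n, cocycleProd wa wb k n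
      = !![Xn n, Xn n - D n; A n - Xn n, A n - Xn n + D n] := by
    intro n
    induction n with
    | zero =>
      have h0 : A 0 = 1 := div_self (hu0 0)
      have h1 : D 0 = 1 := by simp [hDdef]
      simp only [hXn]
      rw [h0, h1]
      ext i j
      fin_cases i <;> fin_cases j <;> simp [cocycleProd]
    | succ n ih =>
      have h1 : cocycleProd wa wb k (n + 1) = _ := cocycle_succ wa wb k n
      rw [ih, hB] at h1
      have h2 : Xn (n + 1) = Xn n * x n + (Xn n - D n) * (a n - x n) := by
        have h3 : Xn (n + 1) = (cocycleProd wa wb k (n + 1)) 0 0 := rfl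
        rw [h3, h1]
        simp [Matrix.mul_apply, Fin.sum_univ_two]
      rw [h2, h1, hAs, hDs]
      ext i j
      fin_cases i <;> fin_cases j <;> simp [Matrix.mul_apply, Fin.sum_univ_two] <;> ring
  have hXs : ∀ n, Xn (n + 1) = Xn n * (A (n + 1) / A n) + D n * (x n - a n) := by
    intro n
    have h2 : Xn (n + 1) = Xn n * x n + (Xn n - D n) * (a n - x n) := by
      simp only [hXn]
      rw [cocycle_succ, hM n, hB]
      simp [Matrix.mul_apply, Fin.sum_univ_two, hXn]
    rw [h2, hAs, mul_div_cancel_left₀ _ (hA0 n)]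
    ring
  have hcb : ∀ n, ‖x n - a n‖ ≤ 2 * L := by
    intro n
    have : x n - a n = -((posPoly (Cb wa wb)).eval (u n) + (posPoly (Pb wa wb)).eval (u n)) := by
      rw [hxd, hatot]; ring
    rw [this, norm_neg]
    refine (norm_add_le _ _).trans ?_
    have h1 := posPoly_norm_le (Cb wa wb) ((L : ℝ) ^ n * k)
    have h2 := posPoly_norm_le (Pb wa wb) ((L : ℝ) ^ n * k)
    simp only [hu]
    linarith
  have hAlim : Tendsto (fun n : ℕ => (1 / n : ℝ) * Real.log ‖A n‖) atTop (nhds 0) := by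
    have h1 := hulast.sub (tendsto_one_div_atTop_nhds_zero_nat.mul_const (Real.log ‖u 0 - 1‖))
    simp only [zero_mul, sub_zero] at h1
    refine h1.congr fun n => ?_
    simp only [hAdef]
    rw [norm_div, Real.log_div (norm_ne_zero_iff.2 (hu0 n)) (norm_ne_zero_iff.2 (hu0 0))]
    ring
  have hDlim : Tendsto (fun n : ℕ => (1 / n : ℝ) * Real.log ‖D n‖) atTop (nhds m) := by
    refine hdlim.congr fun n => ?_
    simp only [hDdef]
    rw [norm_prod, Real.log_prod (fun j _ => norm_ne_zero_iff.2 (hd0 j))]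
  have hE : ∀ n, entrySum (cocycleProd wa wb k n)
      = ‖Xn n‖ + ‖Xn n - D n‖ + ‖A n - Xn n‖ + ‖A n - Xn n + D n‖ := by
    intro n
    rw [entrySum, hM n]
    simp
  have hElow1 : ∀ n, ‖A n‖ ≤ entrySum (cocycleProd wa wb k n) := by
    intro n
    rw [hE]
    have : A n = Xn n + (A n - Xn n) := by ring
    have h1 := norm_add_le (Xn n) (A n - Xn n)
    rw [← this] at h1
    have := norm_nonneg (Xn n - D n)
    have := norm_nonneg (A n - Xn n + D n)
    linarith
  have hElow2 : ∀ n, ‖D n‖ ≤ entrySum (cocycleProd wa wb k n) := by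
    intro n
    rw [hE]
    have : D n = Xn n - (Xn n - D n) := by ring
    have h1 := norm_sub_le (Xn n) (Xn n - D n)
    rw [← this] at h1
    have := norm_nonneg (A n - Xn n)
    have := norm_nonneg (A n - Xn n + D n)
    linarith
  have hEpos : ∀ n, 0 < entrySum (cocycleProd wa wb k n) := fun n =>
    (norm_pos_iff.2 (hA0 n)).trans_le (hElow1 n)
  have hElim := det_limit A D Xn (fun n => x n - a n)
    (fun n => entrySum (cocycleProd wa wb k n)) (2 * L) m hA0 hD0 (by positivity) hcb hXs hAlim hDlim
    (fun n => by linarith [hElow1 n, hEpos n]) (fun n => by linarith [hElow2 n, hEpos n])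
    (fun n => by
      rw [hE]
      have h1 := norm_sub_le (Xn n) (D n)
      have h2 := norm_sub_le (A n) (Xn n)
      have h3 := norm_add_le (A n - Xn n) (D n)
      have := norm_nonneg (A n)
      have := norm_nonneg (D n)
      linarith)
  have hdet : ∀ n, (cocycleProd wa wb k n).det = A n * D n := by
    intro n
    rw [hM n, Matrix.det_fin_two_of]
    ring
  have hinvlim : Tendsto (fun n : ℕ => (1 / n : ℝ) * Real.log (entrySum (cocycleProd wa wb k n)⁻¹))
      atTop (nhds (max 0 m - m)) := by
    have h1 := (hElim.sub hAlim).sub hDlim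
    rw [sub_zero] at h1
    refine h1.congr fun n => ?_
    have hAn := norm_ne_zero_iff.2 (hA0 n)
    have hDn := norm_ne_zero_iff.2 (hD0 n)
    rw [entrySum_inv, hdet, norm_mul, Real.log_mul (inv_ne_zero (mul_ne_zero hAn hDn)) (hEpos n).ne',
      Real.log_inv, Real.log_mul hAn hDn]
    ring
  have hinvpos : ∀ n, 0 < entrySum (cocycleProd wa wb k n)⁻¹ := by
    intro n
    rw [entrySum_inv, hdet]
    exact mul_pos (inv_pos.2 (norm_pos_iff.2 (mul_ne_zero (hA0 n) (hD0 n)))) (hEpos n)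
  have htrans : ∀ (F : ℕ → Matrix (Fin 2) (Fin 2) ℂ) (l : ℝ), (∀ n, 0 < entrySum (F n)) →
      Tendsto (fun n : ℕ => (1 / n : ℝ) * Real.log (entrySum (F n))) atTop (nhds l) →
      Tendsto (fun n : ℕ => (1 / n : ℝ) * Real.log (opNorm (F n))) atTop (nhds l) := by
    intro F l hF hl
    have h4 : Tendsto (fun n : ℕ => (1 / n : ℝ) * Real.log (entrySum (F n))
        - (1 / n : ℝ) * Real.log 4) atTop (nhds l) := by
      simpa using hl.sub (tendsto_one_div_atTop_nhds_zero_nat.mul_const (Real.log 4))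
    refine tendsto_of_tendsto_of_tendsto_of_le_of_le h4 hl (fun n => ?_) (fun n => ?_)
    · have h1 := entrySum_le (F n)
      have hp : 0 < opNorm (F n) := by linarith [hF n]
      have h2 := Real.log_le_log (hF n) h1
      rw [Real.log_mul (by norm_num) hp.ne'] at h2
      have h3 : (1 / n : ℝ) * Real.log (entrySum (F n))
          ≤ (1 / n : ℝ) * (Real.log 4 + Real.log (opNorm (F n))) := by gcongr
      simp only
      linarith
    · have hp : 0 < opNorm (F n) := by linarith [hF n, entrySum_le (F n)]
      have h2 := Real.log_le_log hp (opNorm_le_entrySum (F n))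
      simp only
      gcongr
  refine ⟨Real.log (Real.sqrt L) - max 0 m, Real.log (Real.sqrt L) + (max 0 m - m),
    (htrans _ _ hEpos hElim).const_sub _, (htrans _ _ hinvpos hinvlim).const_add _, ?_, ?_⟩
  · exact sub_pos.2 (max_lt hLpos hm)
  · have := le_max_right 0 m
    linarith
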